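/- The set of total canonical term graphs over a signature Σ, equipped with the rigid distance d†(g,h) = 2^{−sim†(g,h)}, is a complete ultrametric space (every Cauchy sequence converges). -/

import Mathlib

set_option autoImplicit false

namespace TGR

/-- A signature: a type of symbols, each with a finite arity. -/
structure Signature where
  Sym : Type
  ar : Sym → ℕ

/-- The signature `Σ_⊥`: `Σ` extended by a fresh nullary symbol `⊥` (here `none`). -/
def Signature.bot (S : Signature) : Signature where
  Sym := Option S.Sym
  ar := fun o => match o with
    | none => 0
    | some f => S.ar f

/-- A rooted graph over a signature `S` with nodes `N`: a labelling, a successor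
function respecting arities, and a root node. -/
structure TermGraph (S : Signature) (N : Type) where
  lab : N → S.Sym
  suc : (n : N) → Fin (S.ar (lab n)) → N
  root : N

namespace TermGraph

variable {S : Signature} {N M K : Type}

/-- `g.IsPos π n`: `π` is a position (path of successor indices from the root) of node `n`. -/
inductive IsPos (g : TermGraph S N) : List ℕ → N → Prop
  | root : IsPos g [] g.root
  | step {π : List ℕ} {n : N} (h : IsPos g π n) (i : Fin (S.ar (g.lab n))) :
      IsPos g (π ++ [(i : ℕ)]) (g.suc n i)

/-- All nodes are reachable from the root. -/
def Reachable (g : TermGraph S N) : Prop :=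
  ∀ n : N, ∃ π : List ℕ, g.IsPos π n

/-- The set of positions of `g`. -/
def pos (g : TermGraph S N) : Set (List ℕ) :=
  {π | ∃ n : N, g.IsPos π n}

/-- The set of positions of node `n` in `g`. -/
def nodePos (g : TermGraph S N) (n : N) : Set (List ℕ) :=
  {π | g.IsPos π n}

/-- `π ∼_g π'`: `π` and `π'` are positions of the same node. -/
def Aliases (g : TermGraph S N) (π π' : List ℕ) : Prop :=
  ∃ n : N, g.IsPos π n ∧ g.IsPos π' n

/-- A position is acyclic if it passes no node twice. -/
def IsAcyclicPos (g : TermGraph S N) (π : List ℕ) : Prop :=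
  ∀ (π₁ π₂ : List ℕ) (n : N), π₁ <+: π₂ → π₂ <+: π →
    g.IsPos π₁ n → g.IsPos π₂ n → π₁ = π₂

/-- The set of acyclic positions of node `n` in `g`. -/
def nodePosAcy (g : TermGraph S N) (n : N) : Set (List ℕ) :=
  {π | g.IsPos π n ∧ g.IsAcyclicPos π}

/-- The set of acyclic positions of `g`. -/
def posAcy (g : TermGraph S N) : Set (List ℕ) :=
  {π | (∃ n : N, g.IsPos π n) ∧ g.IsAcyclicPos π}

/-- The depth of a node: the minimal length of its positions. -/
noncomputable def depth (g : TermGraph S N) (n : N) : ℕ :=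
  sInf {k : ℕ | ∃ π : List ℕ, g.IsPos π n ∧ π.length = k}

open Classical in
/-- The (unique) node at a position. -/
noncomputable def nodeAt (g : TermGraph S N) (π : List ℕ) : N :=
  if h : ∃ n : N, g.IsPos π n then h.choose else g.root

/-- The label `g(π)` at a position. -/
noncomputable def labAt (g : TermGraph S N) (π : List ℕ) : S.Sym :=
  g.lab (g.nodeAt π)

/-- `Δ`-homomorphism: root, labelling and successor conditions, the latter two
suspended on `Δ`-labelled nodes. -/
structure IsDHom (Δ : Set S.Sym) (g : TermGraph S N) (h : TermGraph S M)
    (φ : N → M) : Prop where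
  root_eq : φ g.root = h.root
  lab_eq : ∀ n : N, g.lab n ∉ Δ → h.lab (φ n) = g.lab n
  suc_eq : ∀ n : N, g.lab n ∉ Δ → ∀ (i : ℕ) (hi : i < S.ar (g.lab n))
      (hi' : i < S.ar (h.lab (φ n))),
      φ (g.suc n ⟨i, hi⟩) = h.suc (φ n) ⟨i, hi'⟩

/-- Rigidity: `Pa_g(n) = Pa_h(φ n)` for all non-`Δ`-labelled nodes `n`. -/
def IsRigid (Δ : Set S.Sym) (g : TermGraph S N) (h : TermGraph S M)
    (φ : N → M) : Prop :=
  ∀ n : N, g.lab n ∉ Δ → g.nodePosAcy n = h.nodePosAcy (φ n)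

/-- Rigid `Δ`-homomorphism. -/
def IsRigidDHom (Δ : Set S.Sym) (g : TermGraph S N) (h : TermGraph S M)
    (φ : N → M) : Prop :=
  IsDHom Δ g h φ ∧ IsRigid Δ g h φ

/-- Isomorphism of term graphs: a homomorphism with an inverse homomorphism. -/
def Iso (g : TermGraph S N) (h : TermGraph S M) : Prop :=
  ∃ (φ : N → M) (ψ : M → N), IsDHom ∅ g h φ ∧ IsDHom ∅ h g ψ ∧
    (∀ n : N, ψ (φ n) = n) ∧ (∀ m : M, φ (ψ m) = m)

/-- A partial term graph (over `Σ_⊥`) is total if no node is labelled `⊥`. -/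
def Total (g : TermGraph S.bot N) : Prop := ∀ n : N, g.lab n ≠ none

/-- Rigid `⊥`-homomorphism between partial term graphs. -/
def IsRigidBotHom (g : TermGraph S.bot N) (h : TermGraph S.bot M)
    (φ : N → M) : Prop :=
  IsRigidDHom ({none} : Set (Option S.Sym)) g h φ

/-- The `⊥`-depth of a partial term graph: the minimal depth of a `⊥`-labelled
node, `ω` (`⊤`) if there is none. -/
noncomputable def botDepth (g : TermGraph S.bot N) : ℕ∞ :=
  sInf {d : ℕ∞ | ∃ n : N, g.lab n = none ∧ (g.depth n : ℕ∞) = d}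

/-- `m` is an acyclic predecessor of `n`: some acyclic position `π ++ [i]` of `n`
has `π` a position of `m`. -/
def acyPred (g : TermGraph S N) (n : N) : Set N :=
  {m | ∃ (π : List ℕ) (i : ℕ), (π ++ [i]) ∈ g.nodePosAcy n ∧ g.IsPos π m}

/-- Retained nodes of the truncation at depth `d`: the least set of nodes
containing all nodes of depth `< d` and closed under acyclic predecessors. -/
inductive Retained (g : TermGraph S N) (d : ℕ) : N → Prop
  | shallow {n : N} : g.depth n < d → Retained g d n
  | pred {n m : N} : Retained g d n → m ∈ g.acyPred n → Retained g d m

theorem not_retained_zero {g : TermGraph S N} (n : N) : ¬ g.Retained 0 n := by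
  intro h
  induction h with
  | shallow hd => exact Nat.not_lt_zero _ hd
  | pred _ _ ih => exact ih

/-- Fringe nodes of the truncation at depth `d` (a pair `(n, i)` stands for the
fresh node `n^i`); at depth `0` the fringe is just (a copy of) the root. -/
def IsFringe (g : TermGraph S.bot N) (d : ℕ) (p : N × ℕ) : Prop :=
  if d = 0 then p = (g.root, 0)
  else g.Retained d p.1 ∧ ∃ h : p.2 < S.bot.ar (g.lab p.1),
    (¬ g.Retained d (g.suc p.1 ⟨p.2, h⟩) ∨
      (d - 1 ≤ g.depth p.1 ∧ p.1 ∉ g.acyPred (g.suc p.1 ⟨p.2, h⟩)))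

/-- The node set of the rigid truncation: retained nodes plus fringe nodes. -/
def TNode (g : TermGraph S.bot N) (d : ℕ) : Type :=
  {x : N ⊕ (N × ℕ) // Sum.elim (g.Retained d) (g.IsFringe d) x}

def truncLab (g : TermGraph S.bot N) (d : ℕ) (x : TNode g d) : S.bot.Sym :=
  Sum.elim (fun n => g.lab n) (fun _ => none) x.1

open Classical in
noncomputable def truncSuc (g : TermGraph S.bot N) (d : ℕ) :
    (x : TNode g d) → Fin (S.bot.ar (truncLab g d x)) → TNode g d
  | ⟨Sum.inl n, hn⟩ => fun i =>
      if hf : g.IsFringe d (n, (i : ℕ)) then ⟨Sum.inr (n, (i : ℕ)), hf⟩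
      else
        ⟨Sum.inl (g.suc n ⟨(i : ℕ), i.isLt⟩), by
          show g.Retained d (g.suc n ⟨(i : ℕ), i.isLt⟩)
          rcases Nat.eq_zero_or_pos d with hd | hd
          · subst hd
            exact ((not_retained_zero n) hn).elim
          · by_contra hc
            apply hf
            show g.IsFringe d (n, (i : ℕ))
            unfold IsFringe
            rw [if_neg (Nat.pos_iff_ne_zero.mp hd)]
            exact ⟨hn, i.isLt, Or.inl hc⟩⟩
  | ⟨Sum.inr p, hp⟩ => fun i => absurd i.isLt (Nat.not_lt_zero _)

noncomputable def truncRoot (g : TermGraph S.bot N) (d : ℕ) : TNode g d :=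
  if hd : d = 0 then
    ⟨Sum.inr (g.root, 0), by
      subst hd
      show g.IsFringe 0 (g.root, 0)
      simp [IsFringe]⟩
  else
    ⟨Sum.inl g.root, by
      show g.Retained d g.root
      exact Retained.shallow (lt_of_le_of_lt
        (Nat.sInf_le ⟨[], IsPos.root, rfl⟩) (Nat.pos_of_ne_zero hd))⟩

/-- The rigid truncation `g†d` of a partial term graph at finite depth `d`. -/
noncomputable def trunc (g : TermGraph S.bot N) (d : ℕ) :
    TermGraph S.bot (TNode g d) where
  lab := truncLab g d
  suc := truncSuc g d
  root := truncRoot g d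

end TermGraph

/-- A canonical term graph: a term graph whose nodes are sets of positions,
each node being exactly its set of positions, with all nodes reachable. -/
structure CTG (S : Signature) where
  nodes : Set (Set (List ℕ))
  tg : TermGraph S ↥nodes
  reach : tg.Reachable
  canon : ∀ n : ↥nodes, (n : Set (List ℕ)) = tg.nodePos n

namespace CTG

variable {S : Signature}

def pos (g : CTG S) : Set (List ℕ) := g.tg.pos
def Aliases (g : CTG S) : List ℕ → List ℕ → Prop := g.tg.Aliases
def posAcy (g : CTG S) : Set (List ℕ) := g.tg.posAcy
noncomputable def labAt (g : CTG S) : List ℕ → S.Sym := g.tg.labAt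

/-- A canonical partial term graph is total if it has no `⊥`-labelled node. -/
def Total (g : CTG S.bot) : Prop := g.tg.Total

/-- The rigid partial order `g ≤⊥r h`: there is a rigid `⊥`-homomorphism
from `g` to `h`. -/
def LeR (g h : CTG S.bot) : Prop :=
  ∃ φ, TermGraph.IsRigidBotHom g.tg h.tg φ

noncomputable def botDepth (g : CTG S.bot) : ℕ∞ := g.tg.botDepth

/-- `TruncIso g h d`: the rigid truncations of `g` and `h` at depth `d ≤ ω`
are isomorphic (`g†ω = g`). -/
def TruncIso {N M : Type} (g : TermGraph S.bot N) (h : TermGraph S.bot M)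
    (d : ℕ∞) : Prop :=
  (d = ⊤ → TermGraph.Iso g h) ∧
  ∀ k : ℕ, d = (k : ℕ∞) → TermGraph.Iso (g.trunc k) (h.trunc k)

/-- The rigid similarity `sim†(g,h)`: the maximal `d ≤ ω` such that
`g†d ≅ h†d`. -/
noncomputable def simr (g h : CTG S.bot) : ℕ∞ :=
  sSup {d : ℕ∞ | TruncIso g.tg h.tg d}

open Classical in
/-- The rigid distance `d†(g,h) = 2^{-sim†(g,h)}` (with `2^{-ω} = 0`). -/
noncomputable def rdist (g h : CTG S.bot) : ℝ :=
  if simr g h = ⊤ then 0 else (1 / 2 : ℝ) ^ (simr g h).toNat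

def IsUB (A : Set (CTG S.bot)) (u : CTG S.bot) : Prop := ∀ g ∈ A, LeR g u

def IsLubR (A : Set (CTG S.bot)) (u : CTG S.bot) : Prop :=
  IsUB A u ∧ ∀ v, IsUB A v → LeR u v

def IsLB (A : Set (CTG S.bot)) (l : CTG S.bot) : Prop := ∀ g ∈ A, LeR l g

def IsGlbR (A : Set (CTG S.bot)) (l : CTG S.bot) : Prop :=
  IsLB A l ∧ ∀ m, IsLB A m → LeR m l

/-- A directed set: non-empty and every two elements have an upper bound inside. -/
def DirectedR (A : Set (CTG S.bot)) : Prop :=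
  A.Nonempty ∧ ∀ g ∈ A, ∀ h ∈ A, ∃ u ∈ A, LeR g u ∧ LeR h u

/-- `L` is the limit inferior `⨆_{β<α} ⨅_{β≤ι<α} f ι` of the ordinal-indexed
sequence `(f ι)_{ι<α}` in the rigid partial order. -/
def IsLiminfR (α : Ordinal.{0}) (f : Ordinal.{0} → CTG S.bot) (L : CTG S.bot) : Prop :=
  ∃ inf : Ordinal.{0} → CTG S.bot,
    (∀ β < α, IsGlbR {g | ∃ ι, β ≤ ι ∧ ι < α ∧ g = f ι} (inf β)) ∧
    IsLubR {g | ∃ β < α, g = inf β} L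

/-- Cauchy condition for an ordinal-indexed sequence w.r.t. the rigid distance. -/
def OrdCauchy (α : Ordinal.{0}) (f : Ordinal.{0} → CTG S.bot) : Prop :=
  ∀ ε : ℝ, 0 < ε → ∃ β < α, ∀ ι ι' : Ordinal.{0},
    β < ι → ι < ι' → ι' < α → rdist (f ι) (f ι') < ε

/-- Convergence of an ordinal-indexed sequence to `g` w.r.t. the rigid distance. -/
def OrdTendsto (α : Ordinal.{0}) (f : Ordinal.{0} → CTG S.bot) (g : CTG S.bot) : Prop :=
  ∀ ε : ℝ, 0 < ε → ∃ β < α, ∀ ι : Ordinal.{0}, β < ι → ι < α → rdist (f ι) g < ε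

/-- `u` is the unravelling of `g`: the term tree with the same positions and
labels as `g` and trivial aliasing. -/
def IsUnravelling (g u : CTG S) : Prop :=
  u.pos = g.pos ∧ (∀ π ∈ g.pos, u.labAt π = g.labAt π) ∧
  (∀ π π' : List ℕ, u.Aliases π π' ↔ (π ∈ g.pos ∧ π = π'))

end CTG

/-- A labelled quotient tree over a signature `S`. -/
structure LQT (S : Signature) where
  P : Set (List ℕ)
  nonempty : P.Nonempty
  l : List ℕ → S.Sym
  rel : List ℕ → List ℕ → Prop
  rel_refl : ∀ π ∈ P, rel π π
  rel_symm : ∀ π π' : List ℕ, rel π π' → rel π' π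
  rel_trans : ∀ π π' π'' : List ℕ, rel π π' → rel π' π'' → rel π π''
  rel_mem : ∀ π π' : List ℕ, rel π π' → π ∈ P ∧ π' ∈ P
  reach_mem : ∀ (π : List ℕ) (i : ℕ), π ++ [i] ∈ P → π ∈ P
  reach_ar : ∀ (π : List ℕ) (i : ℕ), π ++ [i] ∈ P → i < S.ar (l π)
  congr_lab : ∀ π π' : List ℕ, rel π π' → l π = l π'
  congr_suc : ∀ (π π' : List ℕ) (i : ℕ), rel π π' → i < S.ar (l π) →
    rel (π ++ [i]) (π' ++ [i])

end TGR

namespace TGR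

/-!
By rigidity a node of a term graph is determined by its set of acyclic positions. Hence the
isomorphism type of `g†d` is recorded by a plain set, the *skeleton* of `g` at depth `d`: for every
retained node, its label, its acyclic positions and, for every outgoing edge that the truncation
keeps, the acyclic positions of the target. So `d ≤ sim†(g, h)` means equality of two sets, which
makes the ultrametric laws immediate. In a Cauchy sequence the skeleton at every depth is
eventually constant, so labels and aliasing of positions are eventually constant too. The eventual
values form a labelled quotient tree; the canonical term graph it describes has all the
eventual skeletons, because membership of a position in a set of acyclic positions only depends on
the aliasing of finitely many positions.
-/

namespace TermGraph

/-! ### Positions -/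

section Positions

variable {S : Signature} {N M : Type} {g : TermGraph S N} {h : TermGraph S M}
  {π π₁ π₂ ρ : List ℕ} {i : ℕ} {n m k : N}

/-- `g.Edge n i m`: the `i`-th successor of `n` is `m`. Being a relation with a plain index, it
compares edges of different graphs without casts between `Fin` types. -/
def Edge (g : TermGraph S N) (n : N) (i : ℕ) (m : N) : Prop :=
  ∃ hi : i < S.ar (g.lab n), g.suc n ⟨i, hi⟩ = m

theorem Edge.unique (hm : g.Edge n i m) (hk : g.Edge n i k) : m = k := by
  obtain ⟨_, rfl⟩ := hm
  obtain ⟨_, rfl⟩ := hk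
  rfl

theorem Edge.exists_of_lab_eq {n' : M} (hm : g.Edge n i m) (hlab : g.lab n = h.lab n') :
    ∃ m', h.Edge n' i m' :=
  ⟨_, hlab ▸ hm.1, rfl⟩

theorem isPos_nil_iff : g.IsPos [] n ↔ n = g.root := by
  refine ⟨fun hn => ?_, fun hn => hn ▸ .root⟩
  generalize hπ : ([] : List ℕ) = π at hn
  cases hn with
  | root => rfl
  | step => simp at hπ

theorem isPos_append_singleton_iff :
    g.IsPos (π ++ [i]) m ↔ ∃ n, g.IsPos π n ∧ g.Edge n i m := by
  constructor
  · intro hm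
    generalize hρ : π ++ [i] = ρ at hm
    cases hm with
    | root => simp at hρ
    | @step _ n hn j =>
      obtain ⟨rfl, hij⟩ := List.append_inj' hρ rfl
      obtain rfl : i = j := by simpa using hij
      exact ⟨n, hn, j.2, rfl⟩
  · rintro ⟨n, hn, hi, rfl⟩
    exact hn.step ⟨i, hi⟩

theorem IsPos.append_edge (hn : g.IsPos π n) (hm : g.Edge n i m) : g.IsPos (π ++ [i]) m :=
  isPos_append_singleton_iff.2 ⟨n, hn, hm⟩

theorem IsPos.unique (hn : g.IsPos π n) (hm : g.IsPos π m) : n = m := by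
  induction hn generalizing m with
  | root => exact (isPos_nil_iff.1 hm).symm
  | step _ i ih =>
    obtain ⟨n', hn', he⟩ := isPos_append_singleton_iff.1 hm
    obtain rfl := ih hn'
    exact Edge.unique ⟨i.2, rfl⟩ he

theorem IsPos.append_of_aliases (h₁ : g.IsPos π₁ m) (h₂ : g.IsPos π₂ m)
    (hn : g.IsPos (π₂ ++ ρ) n) : g.IsPos (π₁ ++ ρ) n := by
  induction ρ using List.reverseRecOn generalizing n with
  | nil =>
    rw [List.append_nil] at hn ⊢
    exact h₂.unique hn ▸ h₁
  | append_singleton ρ i ih =>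
    rw [← List.append_assoc] at hn ⊢
    obtain ⟨k, hk, he⟩ := isPos_append_singleton_iff.1 hn
    exact (ih hk).append_edge he

theorem depth_le_length (hn : g.IsPos π n) : g.depth n ≤ π.length :=
  Nat.sInf_le ⟨π, hn, rfl⟩

theorem IsAcyclicPos.of_prefix (hρ : g.IsAcyclicPos ρ) (hπ : π <+: ρ) : g.IsAcyclicPos π :=
  fun π₁ π₂ n h₁ h₂ => hρ π₁ π₂ n h₁ (h₂.trans hπ)

theorem isAcyclicPos_iff_aliases :
    g.IsAcyclicPos π ↔ ∀ π₁ π₂, π₁ <+: π₂ → π₂ <+: π → g.Aliases π₁ π₂ → π₁ = π₂ :=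
  ⟨fun hπ π₁ π₂ h₁ h₂ ⟨n, hn₁, hn₂⟩ => hπ π₁ π₂ n h₁ h₂ hn₁ hn₂,
    fun hπ π₁ π₂ n h₁ h₂ hn₁ hn₂ => hπ π₁ π₂ h₁ h₂ ⟨n, hn₁, hn₂⟩⟩

theorem mem_nodePosAcy_iff_aliases (hn : g.IsPos π n) :
    ρ ∈ g.nodePosAcy n ↔ g.Aliases π ρ ∧ g.IsAcyclicPos ρ := by
  refine and_congr_left fun _ => ⟨fun hρ => ⟨n, hn, hρ⟩, ?_⟩
  rintro ⟨m, hm, hρ⟩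
  exact hn.unique hm ▸ hρ

theorem nodePosAcy_root : g.nodePosAcy g.root = {[]} := by
  ext π
  rw [Set.mem_singleton_iff]
  constructor
  · rintro ⟨hπ, hacy⟩
    exact (hacy [] π _ List.nil_prefix List.prefix_rfl .root hπ).symm
  · rintro rfl
    exact ⟨.root, fun π₁ π₂ _ h₁ h₂ _ _ => by simp_all⟩

-- A shortest position is acyclic, since cutting out a cycle would shorten it.
theorem exists_mem_nodePosAcy_length_eq_depth (hg : g.Reachable) (n : N) :
    ∃ π ∈ g.nodePosAcy n, π.length = g.depth n := by
  have hne : {k : ℕ | ∃ π : List ℕ, g.IsPos π n ∧ π.length = k}.Nonempty :=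
    let ⟨π, hπ⟩ := hg n
    ⟨_, π, hπ, rfl⟩
  obtain ⟨π, hπ, hlen⟩ := Nat.sInf_mem hne
  refine ⟨π, ⟨hπ, ?_⟩, hlen⟩
  rintro π₁ _ m ⟨σ, rfl⟩ ⟨τ, rfl⟩ h₁ h₂
  have hcut : g.depth n ≤ (π₁ ++ τ).length := depth_le_length (h₁.append_of_aliases h₂ hπ)
  rw [depth, ← hlen] at hcut
  have hσ : σ.length = 0 := by
    simp only [List.length_append] at hcut
    omega
  rw [List.length_eq_zero_iff.1 hσ, List.append_nil]

theorem nodePosAcy_nonempty (hg : g.Reachable) (n : N) : (g.nodePosAcy n).Nonempty :=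
  let ⟨π, hπ, _⟩ := exists_mem_nodePosAcy_length_eq_depth hg n
  ⟨π, hπ⟩

theorem nodePosAcy_injective (hg : g.Reachable) : Function.Injective g.nodePosAcy := by
  intro n m hnm
  obtain ⟨π, hπ⟩ := nodePosAcy_nonempty hg n
  exact hπ.1.unique (hnm ▸ hπ : π ∈ g.nodePosAcy m).1

theorem depth_le_depth_of_nodePosAcy_eq {m : M} (hh : h.Reachable)
    (hnm : g.nodePosAcy n = h.nodePosAcy m) : g.depth n ≤ h.depth m := by
  obtain ⟨π, hπ, hlen⟩ := exists_mem_nodePosAcy_length_eq_depth hh m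
  rw [← hnm] at hπ
  exact hlen ▸ depth_le_length hπ.1

theorem mem_acyPred_of_nodePosAcy_eq {n' : N} {m m' : M}
    (hnm : g.nodePosAcy n = h.nodePosAcy m) (hnm' : g.nodePosAcy n' = h.nodePosAcy m')
    (hn : n ∈ g.acyPred n') : m ∈ h.acyPred m' := by
  obtain ⟨π, i, hπi, hπ⟩ := hn
  have hπn : π ∈ g.nodePosAcy n := ⟨hπ, hπi.2.of_prefix (List.prefix_append _ _)⟩
  rw [hnm] at hπn
  rw [hnm'] at hπi
  exact ⟨π, i, hπi, hπn.1⟩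

end Positions

/-! ### Homomorphisms and isomorphisms -/

section Homomorphisms

variable {S : Signature} {N M : Type} {g : TermGraph S N} {h : TermGraph S M}
  {φ : N → M} {ψ : M → N} {π : List ℕ} {i : ℕ} {n m : N}

theorem IsDHom.edge (hφ : IsDHom ∅ g h φ) (hm : g.Edge n i m) : h.Edge (φ n) i (φ m) := by
  obtain ⟨hi, rfl⟩ := hm
  have hi' : i < S.ar (h.lab (φ n)) := by rwa [hφ.lab_eq n (Set.notMem_empty _)]
  exact ⟨hi', (hφ.suc_eq n (Set.notMem_empty _) i hi hi').symm⟩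

theorem IsDHom.isPos (hφ : IsDHom ∅ g h φ) (hn : g.IsPos π n) : h.IsPos π (φ n) := by
  induction hn with
  | root => exact hφ.root_eq ▸ .root
  | step _ i ih => exact ih.append_edge (hφ.edge ⟨i.2, rfl⟩)

theorem IsDHom.nodePosAcy_eq (hφ : IsDHom ∅ g h φ) (hψ : IsDHom ∅ h g ψ)
    (hψφ : Function.LeftInverse ψ φ) (n : N) : g.nodePosAcy n = h.nodePosAcy (φ n) := by
  ext π
  constructor
  · rintro ⟨hπ, hacy⟩
    exact ⟨hφ.isPos hπ, fun π₁ π₂ m h₁ h₂ hm₁ hm₂ =>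
      hacy π₁ π₂ (ψ m) h₁ h₂ (hψ.isPos hm₁) (hψ.isPos hm₂)⟩
  · rintro ⟨hπ, hacy⟩
    exact ⟨hψφ n ▸ hψ.isPos hπ, fun π₁ π₂ m h₁ h₂ hm₁ hm₂ =>
      hacy π₁ π₂ (φ m) h₁ h₂ (hφ.isPos hm₁) (hφ.isPos hm₂)⟩

theorem Iso.symm (hgh : Iso g h) : Iso h g :=
  let ⟨φ, ψ, hφ, hψ, hψφ, hφψ⟩ := hgh
  ⟨ψ, φ, hψ, hφ, hφψ, hψφ⟩

theorem Iso.refl (g : TermGraph S N) : Iso g g :=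
  have hid : IsDHom ∅ g g id := ⟨rfl, fun _ _ => rfl, fun _ _ _ _ _ => rfl⟩
  ⟨id, id, hid, hid, fun _ => rfl, fun _ => rfl⟩

theorem isDHom_of_relation {R : N → M → Prop} (hR : Relator.RightUnique R)
    (hφ : ∀ n, R n (φ n)) (hroot : R g.root h.root)
    (hlab : ∀ n m, R n m → g.lab n = h.lab m)
    (hedge : ∀ n m i n', R n m → g.Edge n i n' → ∃ m', h.Edge m i m' ∧ R n' m') :
    IsDHom ∅ g h φ where
  root_eq := hR (hφ _) hroot
  lab_eq n _ := (hlab n _ (hφ n)).symm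
  suc_eq n _ i hi hi' := by
    obtain ⟨m', hm', hR'⟩ := hedge n _ i _ (hφ n) ⟨hi, rfl⟩
    exact (hR (hφ _) hR').trans (hm'.unique ⟨hi', rfl⟩)

theorem iso_of_relation {R : N → M → Prop} (htotal : Relator.BiTotal R)
    (hunique : Relator.BiUnique R) (hroot : R g.root h.root)
    (hlab : ∀ n m, R n m → g.lab n = h.lab m)
    (hedge : ∀ n m i n', R n m → g.Edge n i n' → ∃ m', h.Edge m i m' ∧ R n' m') :
    Iso g h := by
  choose φ hφ using htotal.1
  choose ψ hψ using htotal.2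
  refine ⟨φ, ψ, isDHom_of_relation hunique.2 hφ hroot hlab hedge, ?_,
    fun n => hunique.1 (hψ _) (hφ n), fun m => hunique.2 (hφ _) (hψ m)⟩
  refine isDHom_of_relation (R := flip R) (fun _ _ _ h₁ h₂ => hunique.1 h₁ h₂) hψ hroot
    (fun m n hnm => (hlab n m hnm).symm) fun m n i m' hnm hm => ?_
  obtain ⟨n', hn⟩ := hm.exists_of_lab_eq (hlab n m hnm).symm
  obtain ⟨k, hk, hR⟩ := hedge n m i n' hnm hn
  exact ⟨n', hn, hm.unique hk ▸ hR⟩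

end Homomorphisms

/-! ### Skeletons -/

section Skeletons

variable {S : Signature} {N M : Type} {g : TermGraph S N} {h : TermGraph S M}
  {d e i : ℕ} {π : List ℕ} {n n' : N} {m m' : M}

theorem Retained.mono (hed : e ≤ d) (hn : g.Retained e n) : g.Retained d n := by
  induction hn with
  | shallow hn => exact .shallow (hn.trans_le hed)
  | pred _ hp ih => exact .pred ih hp

theorem Retained.ne_zero (hn : g.Retained d n) : d ≠ 0 := by
  rintro rfl
  exact not_retained_zero n hn

theorem retained_of_isPos (hn : g.IsPos π n) (hd : π.length < d) : g.Retained d n :=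
  .shallow ((depth_le_length hn).trans_lt hd)

/-- `g.KeptEdge d n i m`: the edge from `n` to its `i`-th successor `m` survives in the rigid
truncation at depth `d`, i.e. it is not redirected to the fringe node `n^i`. -/
def KeptEdge (g : TermGraph S N) (d : ℕ) (n : N) (i : ℕ) (m : N) : Prop :=
  g.Edge n i m ∧ g.Retained d m ∧ (d - 1 ≤ g.depth n → n ∈ g.acyPred m)

theorem KeptEdge.mono (hed : e ≤ d) (hk : g.KeptEdge e n i n') : g.KeptEdge d n i n' :=
  ⟨hk.1, hk.2.1.mono hed, fun hd => hk.2.2 (by omega)⟩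

theorem Edge.keptEdge_of_isPos (hedge : g.Edge n i n') (hn : g.IsPos π n)
    (hd : π.length + 1 < d) : g.KeptEdge d n i n' := by
  refine ⟨hedge, retained_of_isPos (hn.append_edge hedge) (by simpa using hd), fun hle => ?_⟩
  have := depth_le_length hn
  omega

/-- What the rigid truncation at a given depth remembers about a retained node: its label, its
acyclic positions, and its kept outgoing edges, each given by its index and the acyclic positions
of its target. -/
@[ext]
structure NodeData (S : Signature) where
  lab : S.Sym
  acyPos : Set (List ℕ)
  edges : Set (ℕ × Set (List ℕ))

/-- The data that `g†d` remembers about the node `n`. -/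
def nodeData (g : TermGraph S N) (d : ℕ) (n : N) : NodeData S where
  lab := g.lab n
  acyPos := g.nodePosAcy n
  edges := {p | ∃ m, g.KeptEdge d n p.1 m ∧ g.nodePosAcy m = p.2}

/-- The skeleton of `g` at depth `d`: the data of all retained nodes. It is a complete invariant of
the rigid truncation `g†d` up to isomorphism. -/
def skeleton (g : TermGraph S N) (d : ℕ) : Set (NodeData S) :=
  g.nodeData d '' {n | g.Retained d n}

theorem lab_eq_of_nodeData_eq (hnm : g.nodeData d n = h.nodeData d m) : g.lab n = h.lab m :=
  congrArg NodeData.lab hnm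

theorem nodePosAcy_eq_of_nodeData_eq (hnm : g.nodeData d n = h.nodeData d m) :
    g.nodePosAcy n = h.nodePosAcy m :=
  congrArg NodeData.acyPos hnm

theorem skeleton_zero : g.skeleton 0 = ∅ :=
  Set.image_eq_empty.2 (Set.eq_empty_iff_forall_notMem.2 not_retained_zero)

theorem KeptEdge.exists_of_nodeData_eq (hnm : g.nodeData d n = h.nodeData d m)
    (hk : g.KeptEdge d n i n') :
    ∃ m', h.KeptEdge d m i m' ∧ h.nodePosAcy m' = g.nodePosAcy n' := by
  have hmem : (i, g.nodePosAcy n') ∈ (g.nodeData d n).edges := ⟨n', hk, rfl⟩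
  rwa [hnm] at hmem

theorem exists_nodeData_eq_of_skeleton_eq (hs : g.skeleton d = h.skeleton d)
    (hn : g.Retained d n) : ∃ m, h.Retained d m ∧ g.nodeData d n = h.nodeData d m := by
  obtain ⟨m, hm, hmn⟩ : g.nodeData d n ∈ h.skeleton d := hs ▸ Set.mem_image_of_mem _ hn
  exact ⟨m, hm, hmn.symm⟩

theorem retained_and_nodeData_eq_of_nodePosAcy_eq (hh : h.Reachable)
    (hs : g.skeleton d = h.skeleton d) (hn : g.Retained d n)
    (hnm : g.nodePosAcy n = h.nodePosAcy m) :
    h.Retained d m ∧ g.nodeData d n = h.nodeData d m := by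
  obtain ⟨m', hm', hdata⟩ := exists_nodeData_eq_of_skeleton_eq hs hn
  obtain rfl : m = m' :=
    nodePosAcy_injective hh (hnm.symm.trans (nodePosAcy_eq_of_nodeData_eq hdata))
  exact ⟨hm', hdata⟩

theorem Retained.of_nodePosAcy_eq (hg : g.Reachable)
    (hmatch : ∀ k, g.Retained d k → g.nodePosAcy k ∈ Set.range h.nodePosAcy)
    (hn : g.Retained d n) (hnm : g.nodePosAcy n = h.nodePosAcy m) : h.Retained d m := by
  induction hn generalizing m with
  | shallow hd => exact .shallow ((depth_le_depth_of_nodePosAcy_eq hg hnm.symm).trans_lt hd)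
  | pred hr hp ih =>
    obtain ⟨m', hm'⟩ := hmatch _ hr
    exact .pred (ih hm'.symm) (mem_acyPred_of_nodePosAcy_eq hnm hm'.symm hp)

theorem KeptEdge.of_nodePosAcy_eq (hg : g.Reachable)
    (hmatch : ∀ k, g.Retained d k → g.nodePosAcy k ∈ Set.range h.nodePosAcy)
    (hk : g.KeptEdge d n i n') (hedge : h.Edge m i m') (hnm : g.nodePosAcy n = h.nodePosAcy m)
    (hnm' : g.nodePosAcy n' = h.nodePosAcy m') : h.KeptEdge d m i m' :=
  ⟨hedge, hk.2.1.of_nodePosAcy_eq hg hmatch hnm', fun hd => mem_acyPred_of_nodePosAcy_eq hnm hnm'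
    (hk.2.2 (hd.trans (depth_le_depth_of_nodePosAcy_eq hg hnm.symm)))⟩

theorem nodePosAcy_mem_range_of_skeleton_eq (hed : e ≤ d) (hs : g.skeleton d = h.skeleton d)
    (k : N) (hk : g.Retained e k) : g.nodePosAcy k ∈ Set.range h.nodePosAcy :=
  let ⟨l, _, hl⟩ := exists_nodeData_eq_of_skeleton_eq hs (hk.mono hed)
  ⟨l, (nodePosAcy_eq_of_nodeData_eq hl).symm⟩

theorem edges_nodeData_subset_of_le (hg : g.Reachable) (hed : e ≤ d)
    (hs : g.skeleton d = h.skeleton d) (hnm : g.nodeData d n = h.nodeData d m) :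
    (g.nodeData e n).edges ⊆ (h.nodeData e m).edges := by
  rintro ⟨i, P⟩ ⟨n', hk, rfl⟩
  obtain ⟨m', hm', hP⟩ := (hk.mono hed).exists_of_nodeData_eq hnm
  exact ⟨m', hk.of_nodePosAcy_eq hg (nodePosAcy_mem_range_of_skeleton_eq hed hs) hm'.1
    (nodePosAcy_eq_of_nodeData_eq hnm) hP.symm, hP⟩

theorem skeleton_subset_of_le (hg : g.Reachable) (hh : h.Reachable) (hed : e ≤ d)
    (hs : g.skeleton d = h.skeleton d) : g.skeleton e ⊆ h.skeleton e := by
  rintro _ ⟨n, hn, rfl⟩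
  obtain ⟨m, -, hnm⟩ := exists_nodeData_eq_of_skeleton_eq hs (Retained.mono hed hn)
  have hacy := nodePosAcy_eq_of_nodeData_eq hnm
  have hm := Retained.of_nodePosAcy_eq hg (nodePosAcy_mem_range_of_skeleton_eq hed hs) hn hacy
  refine ⟨m, hm, NodeData.ext (lab_eq_of_nodeData_eq hnm).symm hacy.symm
    (Set.Subset.antisymm ?_ ?_)⟩
  · exact edges_nodeData_subset_of_le hh hed hs.symm hnm.symm
  · exact edges_nodeData_subset_of_le hg hed hs hnm

theorem skeleton_eq_of_le (hg : g.Reachable) (hh : h.Reachable) (hed : e ≤ d)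
    (hs : g.skeleton d = h.skeleton d) : g.skeleton e = h.skeleton e :=
  (skeleton_subset_of_le hg hh hed hs).antisymm (skeleton_subset_of_le hh hg hed hs.symm)

end Skeletons

/-! ### Agreement up to a depth -/

section AgreeBelow

variable {S : Signature} {N M : Type} {g : TermGraph S N} {h : TermGraph S M}
  {d i : ℕ} {π ρ : List ℕ} {n n' : N} {m m' : M}

/-- `g` and `h` have the same positions, the same aliasing and the same labels as far as positions
of length less than `d` are concerned. This is weaker than equality of skeletons at depth `d`, but
is determined by finitely many positions at a time. -/
structure AgreeBelow (d : ℕ) (g : TermGraph S N) (h : TermGraph S M) : Prop where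
  aliases_iff : ∀ ⦃π ρ⦄, π.length < d → ρ.length < d → (g.Aliases π ρ ↔ h.Aliases π ρ)
  lab_eq : ∀ ⦃π n m⦄, π.length < d → g.IsPos π n → h.IsPos π m → g.lab n = h.lab m

theorem AgreeBelow.symm (hgh : AgreeBelow d g h) : AgreeBelow d h g where
  aliases_iff _ _ hπ hρ := (hgh.aliases_iff hπ hρ).symm
  lab_eq _ _ _ hπ hm hn := (hgh.lab_eq hπ hn hm).symm

theorem AgreeBelow.exists_isPos (hgh : AgreeBelow d g h) (hπ : π.length < d)
    (hn : g.IsPos π n) : ∃ m, h.IsPos π m :=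
  let ⟨m, hm, _⟩ := (hgh.aliases_iff hπ hπ).1 ⟨n, hn, hn⟩
  ⟨m, hm⟩

theorem AgreeBelow.isAcyclicPos_iff (hgh : AgreeBelow d g h) (hπ : π.length < d) :
    g.IsAcyclicPos π ↔ h.IsAcyclicPos π := by
  rw [isAcyclicPos_iff_aliases, isAcyclicPos_iff_aliases]
  refine forall₄_congr fun π₁ π₂ h₁ h₂ => ?_
  rw [hgh.aliases_iff ((h₁.trans h₂).length_le.trans_lt hπ) (h₂.length_le.trans_lt hπ)]

theorem AgreeBelow.mem_nodePosAcy_iff (hgh : AgreeBelow d g h) (hn : g.IsPos π n)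
    (hm : h.IsPos π m) (hπ : π.length < d) (hρ : ρ.length < d) :
    ρ ∈ g.nodePosAcy n ↔ ρ ∈ h.nodePosAcy m := by
  rw [mem_nodePosAcy_iff_aliases hn, mem_nodePosAcy_iff_aliases hm, hgh.aliases_iff hπ hρ,
    hgh.isAcyclicPos_iff hρ]

theorem AgreeBelow.edge (hgh : AgreeBelow d g h) (hedge : g.Edge n i n') (hn : g.IsPos π n)
    (hm : h.IsPos π m) (hn' : g.IsPos ρ n') (hm' : h.IsPos ρ m') (hπ : π.length + 1 < d)
    (hρ : ρ.length < d) : h.Edge m i m' := by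
  obtain ⟨k, hk, hkρ⟩ := (hgh.aliases_iff (π := π ++ [i]) (by simpa using hπ) hρ).1
    ⟨n', hn.append_edge hedge, hn'⟩
  obtain rfl := hm'.unique hkρ
  obtain ⟨l, hl, hedge'⟩ := isPos_append_singleton_iff.1 hk
  exact hm.unique hl ▸ hedge'

theorem Iso.agreeBelow (hgh : Iso g h) (d : ℕ) : AgreeBelow d g h := by
  obtain ⟨φ, ψ, hφ, hψ, -, -⟩ := hgh
  refine ⟨fun π ρ _ _ => ⟨fun ⟨n, hπ, hρ⟩ => ⟨φ n, hφ.isPos hπ, hφ.isPos hρ⟩,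
    fun ⟨m, hπ, hρ⟩ => ⟨ψ m, hψ.isPos hπ, hψ.isPos hρ⟩⟩, fun π n m _ hn hm => ?_⟩
  rw [hm.unique (hφ.isPos hn), hφ.lab_eq n (Set.notMem_empty _)]

theorem exists_nodeData_eq_of_isPos (hh : h.Reachable) (hs : g.skeleton d = h.skeleton d)
    (hn : g.IsPos π n) (hπ : π.length < d) :
    ∃ m, h.IsPos π m ∧ g.nodeData d n = h.nodeData d m := by
  induction hn with
  | root =>
    obtain ⟨m, -, hm⟩ := exists_nodeData_eq_of_skeleton_eq hs (retained_of_isPos .root hπ)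
    have hnil : [] ∈ h.nodePosAcy m := by
      rw [← nodePosAcy_eq_of_nodeData_eq hm]
      exact nodePosAcy_root ▸ Set.mem_singleton _
    exact ⟨m, hnil.1, hm⟩
  | @step π n hn i ih =>
    rw [List.length_append, List.length_singleton] at hπ
    obtain ⟨m, hm, hnm⟩ := ih (by omega)
    have hk : g.KeptEdge d n i (g.suc n i) := Edge.keptEdge_of_isPos ⟨i.2, rfl⟩ hn hπ
    obtain ⟨m', hk', hacy⟩ := hk.exists_of_nodeData_eq hnm
    exact ⟨m', hm.append_edge hk'.1,
      (retained_and_nodeData_eq_of_nodePosAcy_eq hh hs hk.2.1 hacy.symm).2⟩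

theorem Aliases.of_skeleton_eq (hh : h.Reachable) (hs : g.skeleton d = h.skeleton d)
    (hπ : π.length < d) (hρ : ρ.length < d) (hal : g.Aliases π ρ) : h.Aliases π ρ := by
  obtain ⟨n, hnπ, hnρ⟩ := hal
  obtain ⟨m, hm, hnm⟩ := exists_nodeData_eq_of_isPos hh hs hnπ hπ
  obtain ⟨m', hm', hnm'⟩ := exists_nodeData_eq_of_isPos hh hs hnρ hρ
  obtain rfl : m = m' :=
    nodePosAcy_injective hh (nodePosAcy_eq_of_nodeData_eq (hnm.symm.trans hnm'))
  exact ⟨m, hm, hm'⟩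

theorem agreeBelow_of_skeleton_eq (hg : g.Reachable) (hh : h.Reachable)
    (hs : g.skeleton d = h.skeleton d) : AgreeBelow d g h where
  aliases_iff _ _ hπ hρ := ⟨.of_skeleton_eq hh hs hπ hρ, .of_skeleton_eq hg hs.symm hπ hρ⟩
  lab_eq π n m hπ hn hm := by
    obtain ⟨m', hm', hnm⟩ := exists_nodeData_eq_of_isPos hh hs hn hπ
    exact hm.unique hm' ▸ lab_eq_of_nodeData_eq hnm

end AgreeBelow

/-! ### Rigid truncations -/

section Truncation

variable {S : Signature} {N M : Type} {g : TermGraph S.bot N} {h : TermGraph S.bot M}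
  {d : ℕ} {π ρ : List ℕ} {i : ℕ} {n n' : N} {m : M} {p : N × ℕ}

theorem isFringe_zero_iff : g.IsFringe 0 p ↔ p = (g.root, 0) := by
  rw [IsFringe, if_pos rfl]

theorem isFringe_iff (hd : d ≠ 0) :
    g.IsFringe d (n, i) ↔ g.Retained d n ∧ ∃ n', g.Edge n i n' ∧ ¬ g.KeptEdge d n i n' := by
  rw [IsFringe, if_neg hd]
  refine and_congr_right fun _ => ⟨fun ⟨hi, hf⟩ => ⟨_, ⟨hi, rfl⟩, fun hk => ?_⟩, ?_⟩
  · exact hf.elim (fun hr => hr hk.2.1) fun hf => hf.2 (hk.2.2 hf.1)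
  · rintro ⟨_, ⟨hi, rfl⟩, hk⟩
    refine ⟨hi, ?_⟩
    by_contra! hf
    exact hk ⟨⟨hi, rfl⟩, hf.1, hf.2⟩

theorem KeptEdge.edge_trunc (hn : g.Retained d n) (hk : g.KeptEdge d n i n') :
    (g.trunc d).Edge ⟨.inl n, hn⟩ i ⟨.inl n', hk.2.1⟩ := by
  obtain ⟨⟨hi, rfl⟩, hr, hp⟩ := hk
  have hf : ¬ g.IsFringe d (n, i) := by
    rw [isFringe_iff hn.ne_zero]
    rintro ⟨_, _, hedge, hk⟩
    obtain rfl := hedge.unique ⟨hi, rfl⟩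
    exact hk ⟨⟨hi, rfl⟩, hr, hp⟩
  exact ⟨hi, dif_neg hf⟩

theorem IsFringe.edge_trunc (hn : g.Retained d n) (hf : g.IsFringe d (n, i)) :
    (g.trunc d).Edge ⟨.inl n, hn⟩ i ⟨.inr (n, i), hf⟩ :=
  let ⟨_, _, hedge, _⟩ := (isFringe_iff hn.ne_zero).1 hf
  ⟨hedge.1, dif_pos hf⟩

theorem keptEdge_or_isFringe_of_edge_trunc {hn : g.Retained d n} {y : TNode g d}
    (hy : (g.trunc d).Edge ⟨.inl n, hn⟩ i y) :
    (∃ n', ∃ hk : g.KeptEdge d n i n', y = ⟨.inl n', hk.2.1⟩) ∨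
      ∃ hf : g.IsFringe d (n, i), y = ⟨.inr (n, i), hf⟩ := by
  by_cases hf : g.IsFringe d (n, i)
  · exact .inr ⟨hf, hy.unique (hf.edge_trunc hn)⟩
  · rw [isFringe_iff hn.ne_zero] at hf
    push Not at hf
    have hk := hf hn _ ⟨hy.1, rfl⟩
    exact .inl ⟨_, hk, hy.unique (hk.edge_trunc hn)⟩

theorem not_edge_trunc_of_fringe (hp : g.IsFringe d p) (y : TNode g d) :
    ¬ (g.trunc d).Edge ⟨.inr p, hp⟩ i y :=
  fun hy => Nat.not_lt_zero _ hy.1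

theorem trunc_root_of_ne_zero (hd : d ≠ 0) :
    (g.trunc d).root = ⟨.inl g.root, retained_of_isPos .root (Nat.pos_of_ne_zero hd)⟩ :=
  dif_neg hd

theorem IsPos.of_trunc {hn : g.Retained d n} (hπ : (g.trunc d).IsPos π ⟨.inl n, hn⟩) :
    g.IsPos π n := by
  induction π using List.reverseRecOn generalizing n with
  | nil =>
    cases (isPos_nil_iff.1 hπ).trans (trunc_root_of_ne_zero hn.ne_zero)
    exact .root
  | append_singleton π i ih =>
    obtain ⟨⟨m | q, hx⟩, hπ, hedge⟩ := isPos_append_singleton_iff.1 hπ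
    · obtain ⟨_, hk, heq⟩ | ⟨_, heq⟩ := keptEdge_or_isFringe_of_edge_trunc hedge
      · cases heq
        exact (ih hπ).append_edge hk.1
      · cases heq
    · exact absurd hedge (not_edge_trunc_of_fringe hx _)

theorem isPos_trunc_of_mem_nodePosAcy (hn : g.Retained d n) (hπ : π ∈ g.nodePosAcy n) :
    (g.trunc d).IsPos π ⟨.inl n, hn⟩ := by
  induction π using List.reverseRecOn generalizing n with
  | nil =>
    obtain rfl := isPos_nil_iff.1 hπ.1
    exact isPos_nil_iff.2 (trunc_root_of_ne_zero hn.ne_zero).symm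
  | append_singleton π i ih =>
    obtain ⟨m, hm, hedge⟩ := isPos_append_singleton_iff.1 hπ.1
    have hpred : m ∈ g.acyPred n := ⟨π, i, hπ, hm⟩
    have hk : g.KeptEdge d m i n := ⟨hedge, hn, fun _ => hpred⟩
    have hacy : g.IsAcyclicPos π := hπ.2.of_prefix (List.prefix_append _ _)
    exact (ih (hn.pred hpred) ⟨hm, hacy⟩).append_edge (hk.edge_trunc _)

theorem exists_retained_of_prefix {hn : g.Retained d n}
    (hπ : (g.trunc d).IsPos π ⟨.inl n, hn⟩) (hρ : ρ <+: π) :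
    ∃ k, ∃ hk : g.Retained d k, (g.trunc d).IsPos ρ ⟨.inl k, hk⟩ := by
  induction π using List.reverseRecOn generalizing n with
  | nil => exact ⟨n, hn, List.prefix_nil.1 hρ ▸ hπ⟩
  | append_singleton π i ih =>
    obtain rfl | hρ := List.prefix_concat_iff.1 hρ
    · exact ⟨n, hn, hπ⟩
    · obtain ⟨⟨k | q, hx⟩, hπ, hedge⟩ := isPos_append_singleton_iff.1 hπ
      · exact ih hπ hρ
      · exact absurd hedge (not_edge_trunc_of_fringe hx _)

theorem isAcyclicPos_trunc_iff {hn : g.Retained d n}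
    (hπ : (g.trunc d).IsPos π ⟨.inl n, hn⟩) :
    (g.trunc d).IsAcyclicPos π ↔ g.IsAcyclicPos π := by
  constructor <;> intro hacy π₁ π₂ x h₁ h₂ hx₁ hx₂ <;>
    obtain ⟨k₁, hk₁, hπ₁⟩ := exists_retained_of_prefix hπ (h₁.trans h₂) <;>
    obtain ⟨k₂, hk₂, hπ₂⟩ := exists_retained_of_prefix hπ h₂
  · obtain rfl := hx₁.unique hπ₁.of_trunc
    obtain rfl := hx₂.unique hπ₂.of_trunc
    exact hacy π₁ π₂ _ h₁ h₂ hπ₁ hπ₂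
  · obtain rfl := hx₁.unique hπ₁
    exact hacy π₁ π₂ k₁ h₁ h₂ hπ₁.of_trunc hx₂.of_trunc

theorem nodePosAcy_trunc (hn : g.Retained d n) :
    (g.trunc d).nodePosAcy ⟨.inl n, hn⟩ = g.nodePosAcy n := by
  ext π
  constructor
  · rintro ⟨hπ, hacy⟩
    exact ⟨hπ.of_trunc, (isAcyclicPos_trunc_iff hπ).1 hacy⟩
  · intro hπ
    have hpos := isPos_trunc_of_mem_nodePosAcy hn hπ
    exact ⟨hpos, (isAcyclicPos_trunc_iff hpos).2 hπ.2⟩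

theorem le_length_of_isPos_trunc_fringe {hp : g.IsFringe d p}
    (hπ : (g.trunc d).IsPos π ⟨.inr p, hp⟩) : d ≤ π.length := by
  obtain rfl | hd := eq_or_ne d 0
  · exact Nat.zero_le _
  obtain rfl | ⟨π, i, rfl⟩ := List.eq_nil_or_concat' π
  · cases (isPos_nil_iff.1 hπ).trans (trunc_root_of_ne_zero hd)
  · obtain ⟨⟨n | q, hx⟩, hπ, hedge⟩ := isPos_append_singleton_iff.1 hπ
    · obtain ⟨_, hk, heq⟩ | ⟨hf, -⟩ := keptEdge_or_isFringe_of_edge_trunc hedge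
      · cases heq
      · obtain ⟨-, n', hn', hk⟩ := (isFringe_iff hd).1 hf
        rw [List.length_append, List.length_singleton]
        exact not_lt.1 fun hlt => hk (hn'.keptEdge_of_isPos hπ.of_trunc hlt)
    · exact absurd hedge (not_edge_trunc_of_fringe hx _)

theorem Retained.depth_lt_of_lab_eq_none (hn : g.Retained d n) (hlab : g.lab n = none) :
    g.depth n < d := by
  cases hn with
  | shallow hn => exact hn
  | pred _ hp =>
    obtain ⟨π, i, hπi, hπ⟩ := hp
    obtain ⟨n', hn', hi, -⟩ := isPos_append_singleton_iff.1 hπi.1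
    rw [← hπ.unique hn', hlab] at hi
    exact absurd hi (Nat.not_lt_zero _)

-- A node sent to the fringe is labelled `⊥`, so has a position shorter than every fringe position.
theorem IsDHom.exists_retained {φ : TNode g d → TNode h d} (hg : g.Reachable)
    (hφ : IsDHom ∅ (g.trunc d) (h.trunc d) φ) (hn : g.Retained d n) :
    ∃ m, ∃ hm : h.Retained d m, φ ⟨.inl n, hn⟩ = ⟨.inl m, hm⟩ := by
  rcases hφn : φ ⟨.inl n, hn⟩ with ⟨m | q, hx⟩
  · exact ⟨m, hx, rfl⟩
  · have hlab : g.lab n = none := by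
      have := hφ.lab_eq ⟨.inl n, hn⟩ (Set.notMem_empty _)
      rw [hφn] at this
      exact this.symm
    obtain ⟨π, hπ, hlen⟩ := exists_mem_nodePosAcy_length_eq_depth hg n
    have hpos := hφ.isPos (isPos_trunc_of_mem_nodePosAcy hn hπ)
    rw [hφn] at hpos
    have hle := le_length_of_isPos_trunc_fringe hpos
    have hlt := hn.depth_lt_of_lab_eq_none hlab
    omega

theorem edges_nodeData_subset_of_isDHom {φ : TNode g d → TNode h d} {ψ : TNode h d → TNode g d}
    (hg : g.Reachable) (hφ : IsDHom ∅ (g.trunc d) (h.trunc d) φ)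
    (hψ : IsDHom ∅ (h.trunc d) (g.trunc d) ψ) (hψφ : Function.LeftInverse ψ φ)
    {hn : g.Retained d n} {hm : h.Retained d m} (hnm : φ ⟨.inl n, hn⟩ = ⟨.inl m, hm⟩) :
    (g.nodeData d n).edges ⊆ (h.nodeData d m).edges := by
  rintro ⟨i, _⟩ ⟨n', hk, rfl⟩
  obtain ⟨m', hm', hnm'⟩ := hφ.exists_retained hg hk.2.1
  have hedge := hφ.edge (hk.edge_trunc hn)
  have hacy := hφ.nodePosAcy_eq hψ hψφ ⟨.inl n', hk.2.1⟩
  rw [hnm, hnm'] at hedge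
  rw [hnm', nodePosAcy_trunc, nodePosAcy_trunc] at hacy
  obtain ⟨_, hk', heq⟩ | ⟨_, heq⟩ := keptEdge_or_isFringe_of_edge_trunc hedge
  · cases heq
    exact ⟨m', hk', hacy.symm⟩
  · cases heq

theorem Iso.skeleton_subset (hg : g.Reachable) (hh : h.Reachable)
    (hgh : Iso (g.trunc d) (h.trunc d)) : g.skeleton d ⊆ h.skeleton d := by
  obtain ⟨φ, ψ, hφ, hψ, hψφ, hφψ⟩ := hgh
  rintro _ ⟨n, hn, rfl⟩
  obtain ⟨m, hm, hnm⟩ := hφ.exists_retained hg hn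
  have hacy := hφ.nodePosAcy_eq hψ hψφ ⟨.inl n, hn⟩
  have hlab := hφ.lab_eq ⟨.inl n, hn⟩ (Set.notMem_empty _)
  rw [hnm] at hlab hacy
  rw [nodePosAcy_trunc, nodePosAcy_trunc] at hacy
  refine ⟨m, hm, NodeData.ext hlab hacy.symm (Set.Subset.antisymm ?_ ?_)⟩
  · exact edges_nodeData_subset_of_isDHom hh hψ hφ hφψ (hnm ▸ hψφ _)
  · exact edges_nodeData_subset_of_isDHom hg hφ hψ hψφ hnm

theorem IsFringe.exists_of_skeleton_eq (hs : g.skeleton d = h.skeleton d)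
    (hp : g.IsFringe d (n, i)) :
    ∃ m, h.IsFringe d (m, i) ∧ g.nodePosAcy n = h.nodePosAcy m := by
  obtain rfl | hd := eq_or_ne d 0
  · obtain ⟨rfl, rfl⟩ := Prod.mk.inj (isFringe_zero_iff.1 hp)
    exact ⟨h.root, isFringe_zero_iff.2 rfl, by rw [nodePosAcy_root, nodePosAcy_root]⟩
  · obtain ⟨hn, n', hn', hk⟩ := (isFringe_iff hd).1 hp
    obtain ⟨m, hm, hnm⟩ := exists_nodeData_eq_of_skeleton_eq hs hn
    obtain ⟨m', hm'⟩ := hn'.exists_of_lab_eq (lab_eq_of_nodeData_eq hnm)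
    refine ⟨m, (isFringe_iff hd).2 ⟨hm, m', hm', fun hk' => hk ?_⟩,
      nodePosAcy_eq_of_nodeData_eq hnm⟩
    obtain ⟨k, hk, -⟩ := hk'.exists_of_nodeData_eq hnm.symm
    exact hn'.unique hk.1 ▸ hk

/-- The correspondence between nodes of two truncations at the same depth: retained nodes correspond
if they have the same acyclic positions, and `n^i` corresponds to `m^i` if so do `n` and `m`. -/
def TruncRel (x : TNode g d) (y : TNode h d) : Prop :=
  Sum.LiftRel (fun n m => g.nodePosAcy n = h.nodePosAcy m)
    (fun p q => g.nodePosAcy p.1 = h.nodePosAcy q.1 ∧ p.2 = q.2) x.1 y.1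

theorem TruncRel.symm {x : TNode g d} {y : TNode h d} (hxy : TruncRel x y) : TruncRel y x := by
  obtain ⟨x, hx⟩ := x
  obtain ⟨y, hy⟩ := y
  cases hxy with
  | inl hnm => exact .inl hnm.symm
  | inr hpq => exact .inr ⟨hpq.1.symm, hpq.2.symm⟩

theorem leftTotal_truncRel (hs : g.skeleton d = h.skeleton d) :
    Relator.LeftTotal (TruncRel : TNode g d → TNode h d → Prop) := by
  rintro ⟨n | ⟨n, i⟩, hx⟩
  · obtain ⟨m, hm, hnm⟩ := exists_nodeData_eq_of_skeleton_eq hs hx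
    exact ⟨⟨.inl m, hm⟩, .inl (nodePosAcy_eq_of_nodeData_eq hnm)⟩
  · obtain ⟨m, hm, hnm⟩ := IsFringe.exists_of_skeleton_eq hs hx
    exact ⟨⟨.inr (m, i), hm⟩, .inr ⟨hnm, rfl⟩⟩

theorem leftUnique_truncRel (hg : g.Reachable) :
    Relator.LeftUnique (TruncRel : TNode g d → TNode h d → Prop) := by
  rintro ⟨x, hx⟩ ⟨y, hy⟩ ⟨z, hz⟩ hxy hzy
  refine Subtype.ext ?_
  cases hxy with
  | inl hxy =>
    cases hzy with
    | inl hzy => exact congrArg Sum.inl (nodePosAcy_injective hg (hxy.trans hzy.symm))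
  | inr hxy =>
    cases hzy with
    | inr hzy =>
      exact congrArg Sum.inr (Prod.ext (nodePosAcy_injective hg (hxy.1.trans hzy.1.symm))
        (hxy.2.trans hzy.2.symm))

theorem truncRel_root : TruncRel (g.trunc d).root (h.trunc d).root := by
  have hacy : g.nodePosAcy g.root = h.nodePosAcy h.root := by
    rw [nodePosAcy_root, nodePosAcy_root]
  obtain rfl | hd := eq_or_ne d 0
  · exact .inr ⟨hacy, rfl⟩
  · rw [trunc_root_of_ne_zero hd, trunc_root_of_ne_zero hd]
    exact .inl hacy

theorem TruncRel.lab_eq {x : TNode g d} {y : TNode h d} (hh : h.Reachable)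
    (hs : g.skeleton d = h.skeleton d) (hxy : TruncRel x y) :
    (g.trunc d).lab x = (h.trunc d).lab y := by
  obtain ⟨x, hx⟩ := x
  obtain ⟨y, hy⟩ := y
  cases hxy with
  | inl hnm =>
    change g.lab _ = h.lab _
    exact lab_eq_of_nodeData_eq (retained_and_nodeData_eq_of_nodePosAcy_eq hh hs hx hnm).2
  | inr _ => rfl

theorem TruncRel.exists_edge {x x' : TNode g d} {y : TNode h d} (hh : h.Reachable)
    (hs : g.skeleton d = h.skeleton d) (hxy : TruncRel x y) (hx' : (g.trunc d).Edge x i x') :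
    ∃ y', (h.trunc d).Edge y i y' ∧ TruncRel x' y' := by
  obtain ⟨x, hx⟩ := x
  obtain ⟨y, hy⟩ := y
  cases hxy with
  | inr => exact absurd hx' (not_edge_trunc_of_fringe hx _)
  | inl hnm =>
    obtain ⟨-, hdata⟩ := retained_and_nodeData_eq_of_nodePosAcy_eq hh hs hx hnm
    obtain ⟨n', hk, rfl⟩ | ⟨hf, rfl⟩ := keptEdge_or_isFringe_of_edge_trunc hx'
    · obtain ⟨m', hk', hacy⟩ := hk.exists_of_nodeData_eq hdata
      exact ⟨_, hk'.edge_trunc hy, .inl hacy.symm⟩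
    · obtain ⟨m', hm', hnm'⟩ := hf.exists_of_skeleton_eq hs
      obtain rfl := nodePosAcy_injective hh (hnm.symm.trans hnm')
      exact ⟨_, hm'.edge_trunc hy, .inr ⟨hnm, rfl⟩⟩

theorem iso_trunc_iff_skeleton_eq (hg : g.Reachable) (hh : h.Reachable) :
    Iso (g.trunc d) (h.trunc d) ↔ g.skeleton d = h.skeleton d := by
  refine ⟨fun hgh => (hgh.skeleton_subset hg hh).antisymm (hgh.symm.skeleton_subset hh hg),
    fun hs => iso_of_relation (R := TruncRel) ⟨leftTotal_truncRel hs, fun y => ?_⟩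
      ⟨leftUnique_truncRel hg, fun _ _ _ h₁ h₂ => leftUnique_truncRel hh h₁.symm h₂.symm⟩
      truncRel_root (fun _ _ hxy => hxy.lab_eq hh hs)
      (fun _ _ _ _ hxy hx' => hxy.exists_edge hh hs hx')⟩
  obtain ⟨x, hyx⟩ := leftTotal_truncRel hs.symm y
  exact ⟨x, hyx.symm⟩

end Truncation
end TermGraph

/-! ### Canonical term graphs and labelled quotient trees -/

namespace TermGraph

variable {S : Signature} {N : Type}

theorem ext_of_isPos_iff {g h : TermGraph S N} (hg : g.Reachable)
    (hpos : ∀ π n, g.IsPos π n ↔ h.IsPos π n) (hlab : g.lab = h.lab) : g = h := by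
  have hroot : g.root = h.root := isPos_nil_iff.1 ((hpos _ _).1 .root)
  obtain ⟨lab, suc, root⟩ := g
  obtain ⟨lab', suc', root'⟩ := h
  obtain rfl : lab = lab' := hlab
  obtain rfl : root = root' := hroot
  obtain rfl : suc = suc' := by
    funext n i
    obtain ⟨π, hπ⟩ := hg n
    exact ((hpos _ _).1 (hπ.step i)).unique (((hpos _ _).1 hπ).step i)
  rfl

end TermGraph

namespace CTG

variable {S : Signature} {g h : CTG S}

theorem coe_eq_setOf_aliases {n : g.nodes} {π : List ℕ} (hn : g.tg.IsPos π n) :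
    n.1 = {ρ | g.tg.Aliases π ρ} := by
  refine (g.canon n).trans (Set.ext fun ρ => ⟨fun hρ => ⟨n, hn, hρ⟩, ?_⟩)
  rintro ⟨m, hm, hρ⟩
  exact hn.unique hm ▸ hρ

theorem nodes_subset_of_forall_agreeBelow (hgh : ∀ d, g.tg.AgreeBelow d h.tg) :
    g.nodes ⊆ h.nodes := by
  intro A hA
  obtain ⟨π, hπ⟩ := g.reach ⟨A, hA⟩
  obtain ⟨m, hm⟩ := (hgh (π.length + 1)).exists_isPos (Nat.lt_succ_self _) hπ
  have hal (ρ : List ℕ) : g.tg.Aliases π ρ ↔ h.tg.Aliases π ρ :=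
    (hgh (π.length + ρ.length + 1)).aliases_iff (by omega) (by omega)
  have hAm : A = m.1 := by
    simp only [coe_eq_setOf_aliases hm, ← hal]
    exact coe_eq_setOf_aliases hπ
  exact hAm ▸ m.2

theorem eq_of_forall_agreeBelow (hgh : ∀ d, g.tg.AgreeBelow d h.tg) : g = h := by
  have hnodes : g.nodes = h.nodes := (nodes_subset_of_forall_agreeBelow hgh).antisymm
    (nodes_subset_of_forall_agreeBelow fun d => (hgh d).symm)
  obtain ⟨nodes, tg, hreach, hcanon⟩ := g
  obtain ⟨nodes', tg', hreach', hcanon'⟩ := h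
  obtain rfl : nodes = nodes' := hnodes
  have hpos (π n) : tg.IsPos π n ↔ tg'.IsPos π n :=
    Set.ext_iff.1 ((hcanon n).symm.trans (hcanon' n)) π
  obtain rfl : tg = tg' := by
    refine TermGraph.ext_of_isPos_iff hreach hpos (funext fun n => ?_)
    obtain ⟨π, hπ⟩ := hreach n
    exact (hgh (π.length + 1)).lab_eq (Nat.lt_succ_self _) hπ ((hpos π n).1 hπ)
  rfl

end CTG

namespace LQT

variable {S : Signature} (L : LQT S) {π ρ : List ℕ}

theorem nil_mem : [] ∈ L.P := by
  obtain ⟨π, hπ⟩ := L.nonempty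
  induction π using List.reverseRecOn with
  | nil => exact hπ
  | append_singleton π i ih => exact ih (L.reach_mem π i hπ)

/-- The nodes of the canonical term graph described by `L`: the classes of `L.rel`. -/
def nodes : Set (Set (List ℕ)) :=
  (fun π => {ρ | L.rel π ρ}) '' L.P

/-- The class of a position of `L`, as a node. -/
def node (hπ : π ∈ L.P) : L.nodes :=
  ⟨{ρ | L.rel π ρ}, π, hπ, rfl⟩

/-- A position representing the given class. -/
noncomputable def rep (A : L.nodes) : List ℕ :=
  A.2.choose

variable {L} {A : L.nodes}

theorem rep_mem : L.rep A ∈ L.P :=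
  A.2.choose_spec.1

theorem mem_iff_rel_rep : ρ ∈ A.1 ↔ L.rel (L.rep A) ρ :=
  (Set.ext_iff.1 A.2.choose_spec.2 ρ).symm

theorem mem_P_of_mem (hπ : π ∈ A.1) : π ∈ L.P :=
  (L.rel_mem _ _ (mem_iff_rel_rep.1 hπ)).2

theorem mem_node (hπ : π ∈ L.P) : π ∈ (L.node hπ).1 :=
  L.rel_refl π hπ

theorem node_eq_of_mem (hπ : π ∈ A.1) : L.node (mem_P_of_mem hπ) = A := by
  have hrep := mem_iff_rel_rep.1 hπ
  refine Subtype.ext (Set.ext fun ρ => Iff.trans ?_ mem_iff_rel_rep.symm)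
  exact ⟨L.rel_trans _ _ _ hrep, L.rel_trans _ _ _ (L.rel_symm _ _ hrep)⟩

variable (L)

/-- The term graph described by a labelled quotient tree. -/
noncomputable def toTermGraph : TermGraph S L.nodes where
  lab A := L.l (L.rep A)
  suc _ i := L.node (L.rel_mem _ _ (L.congr_suc _ _ i (L.rel_refl _ rep_mem) i.2)).1
  root := L.node L.nil_mem

variable {L}

theorem lab_toTermGraph (hπ : π ∈ A.1) : L.toTermGraph.lab A = L.l π :=
  L.congr_lab _ _ (mem_iff_rel_rep.1 hπ)

theorem mem_of_isPos_toTermGraph (hπ : L.toTermGraph.IsPos π A) : π ∈ A.1 := by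
  induction hπ with
  | root => exact mem_node L.nil_mem
  | step _ i ih => exact L.congr_suc _ _ i (mem_iff_rel_rep.1 ih) i.2

theorem isPos_toTermGraph_node (hπ : π ∈ L.P) : L.toTermGraph.IsPos π (L.node hπ) := by
  induction π using List.reverseRecOn with
  | nil => exact .root
  | append_singleton π i ih =>
    have hπ' := L.reach_mem π i hπ
    have hi : i < S.ar (L.toTermGraph.lab (L.node hπ')) := by
      rw [lab_toTermGraph (mem_node hπ')]
      exact L.reach_ar π i hπ
    have hpos := (ih hπ').step ⟨i, hi⟩
    exact node_eq_of_mem (mem_of_isPos_toTermGraph hpos) ▸ hpos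

theorem isPos_toTermGraph_iff : L.toTermGraph.IsPos π A ↔ π ∈ A.1 :=
  ⟨mem_of_isPos_toTermGraph, fun hπ => node_eq_of_mem hπ ▸ isPos_toTermGraph_node _⟩

variable (L)

/-- The canonical term graph described by a labelled quotient tree. -/
noncomputable def toCTG : CTG S where
  nodes := L.nodes
  tg := L.toTermGraph
  reach A := ⟨L.rep A, isPos_toTermGraph_iff.2 (mem_iff_rel_rep.2 (L.rel_refl _ rep_mem))⟩
  canon _ := Set.ext fun _ => isPos_toTermGraph_iff.symm

variable {L}

theorem aliases_toCTG_iff : L.toCTG.tg.Aliases π ρ ↔ L.rel π ρ := by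
  constructor
  · rintro ⟨A, hπ, hρ⟩
    exact L.rel_trans _ _ _ (L.rel_symm _ _ (mem_iff_rel_rep.1 (mem_of_isPos_toTermGraph hπ)))
      (mem_iff_rel_rep.1 (mem_of_isPos_toTermGraph hρ))
  · intro hπρ
    exact ⟨L.node (L.rel_mem _ _ hπρ).1, isPos_toTermGraph_node _, isPos_toTermGraph_iff.2 hπρ⟩

theorem lab_toCTG {A : L.toCTG.nodes} (hπ : L.toCTG.tg.IsPos π A) : L.toCTG.tg.lab A = L.l π :=
  lab_toTermGraph (mem_of_isPos_toTermGraph hπ)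

end LQT

/-! ### Limits -/

namespace TermGraph

section EventualLQT

variable {S : Signature} {N : ℕ → Type} {c : ∀ d, TermGraph S (N d)} {d : ℕ} {π ρ σ : List ℕ}
  {i : ℕ}

theorem labAt_eq {M : Type} {g : TermGraph S M} {n : M} (hn : g.IsPos π n) :
    g.labAt π = g.lab n := by
  have hex : ∃ n, g.IsPos π n := ⟨n, hn⟩
  rw [labAt, nodeAt, dif_pos hex, hex.choose_spec.unique hn]

/-- `π` and `ρ` are positions of the same node in all but finitely many term graphs `c d`. -/
def EventuallyAliases (c : ∀ d, TermGraph S (N d)) (π ρ : List ℕ) : Prop :=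
  ∀ᶠ d in Filter.atTop, (c d).Aliases π ρ

theorem EventuallyAliases.symm (hπρ : EventuallyAliases c π ρ) : EventuallyAliases c ρ π :=
  hπρ.mono fun _ ⟨n, hπ, hρ⟩ => ⟨n, hρ, hπ⟩

theorem EventuallyAliases.trans (hπρ : EventuallyAliases c π ρ)
    (hρσ : EventuallyAliases c ρ σ) : EventuallyAliases c π σ := by
  filter_upwards [hπρ, hρσ] with d ⟨n, hπ, hρ⟩ ⟨m, hρ', hσ⟩
  exact ⟨n, hπ, hρ.unique hρ' ▸ hσ⟩

theorem EventuallyAliases.of_append (hπ : EventuallyAliases c (π ++ [i]) (π ++ [i])) :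
    EventuallyAliases c π π := by
  filter_upwards [hπ] with d ⟨_, hd, _⟩
  obtain ⟨n, hn, -⟩ := isPos_append_singleton_iff.1 hd
  exact ⟨n, hn, hn⟩

variable (hc : ∀ ⦃e d⦄, e ≤ d → AgreeBelow e (c e) (c d))
include hc

theorem eventuallyAliases_iff (hπ : π.length < d) (hρ : ρ.length < d) :
    EventuallyAliases c π ρ ↔ (c d).Aliases π ρ := by
  constructor
  · intro h
    obtain ⟨D, hD, hdD⟩ := (h.and (Filter.eventually_ge_atTop d)).exists
    exact ((hc hdD).aliases_iff hπ hρ).2 hD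
  · intro h
    filter_upwards [Filter.eventually_ge_atTop d] with D hdD
    exact ((hc hdD).aliases_iff hπ hρ).1 h

theorem labAt_length_succ_eq {n : N d} (hπ : π.length < d) (hn : (c d).IsPos π n) :
    (c (π.length + 1)).labAt π = (c d).lab n := by
  have hagree := hc (Nat.succ_le_of_lt hπ)
  obtain ⟨m, hm⟩ := hagree.symm.exists_isPos (Nat.lt_succ_self _) hn
  rw [labAt_eq hm, hagree.lab_eq (Nat.lt_succ_self _) hm hn]

theorem EventuallyAliases.lt_ar (hπ : EventuallyAliases c (π ++ [i]) (π ++ [i])) :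
    i < S.ar ((c (π.length + 1)).labAt π) := by
  obtain ⟨d, ⟨_, hd, _⟩, hlen⟩ := (hπ.and (Filter.eventually_gt_atTop π.length)).exists
  obtain ⟨n, hn, hi, -⟩ := isPos_append_singleton_iff.1 hd
  rwa [labAt_length_succ_eq hc hlen hn]

theorem EventuallyAliases.labAt_eq (hπρ : EventuallyAliases c π ρ) :
    (c (π.length + 1)).labAt π = (c (ρ.length + 1)).labAt ρ := by
  obtain ⟨d, ⟨n, hπ, hρ⟩, hlen⟩ :=
    (hπρ.and (Filter.eventually_gt_atTop (max π.length ρ.length))).exists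
  rw [max_lt_iff] at hlen
  rw [labAt_length_succ_eq hc hlen.1 hπ, labAt_length_succ_eq hc hlen.2 hρ]

theorem EventuallyAliases.append (hπρ : EventuallyAliases c π ρ)
    (hi : i < S.ar ((c (π.length + 1)).labAt π)) :
    EventuallyAliases c (π ++ [i]) (ρ ++ [i]) := by
  filter_upwards [hπρ, Filter.eventually_gt_atTop π.length] with d ⟨n, hπ, hρ⟩ hlen
  rw [labAt_length_succ_eq hc hlen hπ] at hi
  exact ⟨_, hπ.step ⟨i, hi⟩, hρ.step ⟨i, hi⟩⟩

/-- The labelled quotient tree of the eventual aliasing and labels of a coherent sequence of term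
graphs. -/
noncomputable def eventualLQT : LQT S where
  P := {π | EventuallyAliases c π π}
  nonempty := ⟨[], .of_forall fun _ => ⟨_, .root, .root⟩⟩
  l π := (c (π.length + 1)).labAt π
  rel := EventuallyAliases c
  rel_refl _ hπ := hπ
  rel_symm _ _ := .symm
  rel_trans _ _ _ := .trans
  rel_mem _ _ hπρ := ⟨hπρ.trans hπρ.symm, hπρ.symm.trans hπρ⟩
  reach_mem _ _ := .of_append
  reach_ar _ _ := EventuallyAliases.lt_ar hc
  congr_lab _ _ := EventuallyAliases.labAt_eq hc
  congr_suc _ _ _ := .append hc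

theorem agreeBelow_eventualLQT (d : ℕ) : AgreeBelow d (eventualLQT hc).toCTG.tg (c d) where
  aliases_iff _ _ hπ hρ := LQT.aliases_toCTG_iff.trans (eventuallyAliases_iff hc hπ hρ)
  lab_eq _ _ _ hπ hA hn := (LQT.lab_toCTG hA).trans (labAt_length_succ_eq hc hπ hn)

end EventualLQT

section LimitSkeleton

variable {S : Signature} {N : ℕ → Type} {c : ∀ d, TermGraph S (N d)} {M : Type}
  {g : TermGraph S M} (hgc : ∀ d, AgreeBelow d g (c d)) {d : ℕ} {π : List ℕ} {i : ℕ}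
  {n n' : N d} {m : M}
include hgc

theorem nodePosAcy_eq_of_forall_ge {P : Set (List ℕ)} (hm : g.IsPos π m)
    (hP : ∀ D ≥ d, ∃ k, (c D).IsPos π k ∧ (c D).nodePosAcy k = P) : g.nodePosAcy m = P := by
  ext ρ
  obtain ⟨k, hk, rfl⟩ := hP (d + π.length + ρ.length + 1) (by omega)
  exact (hgc _).mem_nodePosAcy_iff hm hk (by omega) (by omega)

variable (hs : ∀ D ≥ d, (c d).skeleton d = (c D).skeleton d)
include hs

theorem nodePosAcy_eq_of_mem_nodePosAcy (hn : (c d).Retained d n) (hπ : π ∈ (c d).nodePosAcy n)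
    (hm : g.IsPos π m) : g.nodePosAcy m = (c d).nodePosAcy n := by
  refine nodePosAcy_eq_of_forall_ge hgc (d := d) hm fun D hD => ?_
  obtain ⟨k, -, hk⟩ := exists_nodeData_eq_of_skeleton_eq (hs D hD) hn
  have hacy := nodePosAcy_eq_of_nodeData_eq hk
  exact ⟨k, (hacy ▸ hπ : π ∈ (c D).nodePosAcy k).1, hacy.symm⟩

theorem nodePosAcy_mem_range_limit (hc : (c d).Reachable) (n : N d)
    (hn : (c d).Retained d n) : (c d).nodePosAcy n ∈ Set.range g.nodePosAcy := by
  obtain ⟨π, hπ⟩ := nodePosAcy_nonempty hc n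
  obtain ⟨k, -, hk⟩ := exists_nodeData_eq_of_skeleton_eq (hs (d + π.length + 1) (by omega)) hn
  have hπk : π ∈ (c (d + π.length + 1)).nodePosAcy k := nodePosAcy_eq_of_nodeData_eq hk ▸ hπ
  obtain ⟨m, hm⟩ := (hgc _).symm.exists_isPos (by omega) hπk.1
  exact ⟨m, nodePosAcy_eq_of_mem_nodePosAcy hgc hs hn hπ hm⟩

theorem lab_eq_limit (hc : (c d).Reachable) (hn : (c d).Retained d n)
    (hmn : g.nodePosAcy m = (c d).nodePosAcy n) : g.lab m = (c d).lab n := by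
  obtain ⟨π, hπ⟩ := nodePosAcy_nonempty hc n
  obtain ⟨k, -, hk⟩ := exists_nodeData_eq_of_skeleton_eq (hs (d + π.length + 1) (by omega)) hn
  have hπk : π ∈ (c (d + π.length + 1)).nodePosAcy k := nodePosAcy_eq_of_nodeData_eq hk ▸ hπ
  rw [lab_eq_of_nodeData_eq hk]
  exact (hgc _).lab_eq (by omega) (hmn ▸ hπ : π ∈ g.nodePosAcy m).1 hπk.1

theorem exists_edge_limit (hc : (c d).Reachable) (hn : (c d).Retained d n)
    (hmn : g.nodePosAcy m = (c d).nodePosAcy n) (hk : (c d).KeptEdge d n i n') :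
    ∃ m', g.Edge m i m' ∧ g.nodePosAcy m' = (c d).nodePosAcy n' := by
  obtain ⟨m', hm'⟩ := hk.1.exists_of_lab_eq (lab_eq_limit hgc hs hc hn hmn).symm
  obtain ⟨π, hπ⟩ := nodePosAcy_nonempty hc n
  have hπm : π ∈ g.nodePosAcy m := hmn ▸ hπ
  refine ⟨m', hm', nodePosAcy_eq_of_forall_ge hgc (d := d) (hπm.1.append_edge hm') fun D hD => ?_⟩
  obtain ⟨k, -, hdata⟩ := exists_nodeData_eq_of_skeleton_eq (hs D hD) hn
  have hπk : π ∈ (c D).nodePosAcy k := nodePosAcy_eq_of_nodeData_eq hdata ▸ hπ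
  obtain ⟨k', hk', hacy⟩ := hk.exists_of_nodeData_eq hdata
  exact ⟨k', hπk.1.append_edge hk'.1, hacy⟩

theorem Retained.exists_of_limit (hg : g.Reachable) (hm : g.Retained d m) :
    ∃ n, (c d).Retained d n ∧ g.nodePosAcy m = (c d).nodePosAcy n := by
  induction hm with
  | @shallow m hd =>
    obtain ⟨π, hπ, hlen⟩ := exists_mem_nodePosAcy_length_eq_depth hg m
    rw [← hlen] at hd
    obtain ⟨n, hn⟩ := (hgc d).exists_isPos hd hπ.1
    have hr := retained_of_isPos hn hd
    exact ⟨n, hr, nodePosAcy_eq_of_mem_nodePosAcy hgc hs hr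
      ⟨hn, ((hgc d).isAcyclicPos_iff hd).1 hπ.2⟩ hπ.1⟩
  | @pred m m' _ hp ih =>
    obtain ⟨n, hn, hmn⟩ := ih
    obtain ⟨π, i, hπi, hπ⟩ := hp
    rw [hmn] at hπi
    obtain ⟨n', hn', -⟩ := isPos_append_singleton_iff.1 hπi.1
    have hr : (c d).Retained d n' := hn.pred ⟨π, i, hπi, hn'⟩
    exact ⟨n', hr, nodePosAcy_eq_of_mem_nodePosAcy hgc hs hr
      ⟨hn', hπi.2.of_prefix (List.prefix_append _ _)⟩ hπ⟩

theorem edges_nodeData_limit_subset (hg : g.Reachable) (hn : (c d).Retained d n)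
    (hmn : g.nodePosAcy m = (c d).nodePosAcy n) :
    (g.nodeData d m).edges ⊆ ((c d).nodeData d n).edges := by
  rintro ⟨i, _⟩ ⟨m', hk, rfl⟩
  obtain ⟨π, hπ⟩ := nodePosAcy_nonempty hg m
  obtain ⟨σ, hσ⟩ := nodePosAcy_nonempty hg m'
  obtain ⟨n', hn', hmn'⟩ := Retained.exists_of_limit hgc hs hg hk.2.1
  set D := d + π.length + σ.length + 2
  have hsD : (c d).skeleton d = (c D).skeleton d := hs D (by omega)
  obtain ⟨k, -, hnk⟩ := exists_nodeData_eq_of_skeleton_eq hsD hn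
  obtain ⟨k', -, hnk'⟩ := exists_nodeData_eq_of_skeleton_eq hsD hn'
  have hmk := hmn.trans (nodePosAcy_eq_of_nodeData_eq hnk)
  have hmk' := hmn'.trans (nodePosAcy_eq_of_nodeData_eq hnk')
  have hedge : (c D).Edge k i k' := (hgc D).edge hk.1 hπ.1 (hmk ▸ hπ : π ∈ (c D).nodePosAcy k).1
    hσ.1 (hmk' ▸ hσ : σ ∈ (c D).nodePosAcy k').1 (by omega) (by omega)
  have hmatch (l : M) (hl : g.Retained d l) : g.nodePosAcy l ∈ Set.range (c D).nodePosAcy := by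
    obtain ⟨x, hx, hlx⟩ := Retained.exists_of_limit hgc hs hg hl
    exact hlx ▸ nodePosAcy_mem_range_of_skeleton_eq le_rfl hsD x hx
  obtain ⟨x, hx, hacy⟩ :=
    (hk.of_nodePosAcy_eq hg hmatch hedge hmk hmk').exists_of_nodeData_eq hnk.symm
  exact ⟨x, hx, hacy.trans hmk'.symm⟩

theorem nodeData_eq_limit (hg : g.Reachable) (hc : (c d).Reachable) (hn : (c d).Retained d n)
    (hmn : g.nodePosAcy m = (c d).nodePosAcy n) : g.nodeData d m = (c d).nodeData d n := by
  refine NodeData.ext (lab_eq_limit hgc hs hc hn hmn) hmn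
    ((edges_nodeData_limit_subset hgc hs hg hn hmn).antisymm ?_)
  rintro ⟨i, _⟩ ⟨n', hk, rfl⟩
  obtain ⟨m', hm', hmn'⟩ := exists_edge_limit hgc hs hc hn hmn hk
  exact ⟨m', hk.of_nodePosAcy_eq hc (nodePosAcy_mem_range_limit hgc hs hc) hm' hmn.symm hmn'.symm,
    hmn'⟩

theorem skeleton_eq_limit (hg : g.Reachable) (hc : (c d).Reachable) :
    g.skeleton d = (c d).skeleton d := by
  apply Set.Subset.antisymm
  · rintro _ ⟨m, hm, rfl⟩
    obtain ⟨n, hn, hmn⟩ := Retained.exists_of_limit hgc hs hg hm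
    exact ⟨n, hn, (nodeData_eq_limit hgc hs hg hc hn hmn).symm⟩
  · rintro _ ⟨n, hn, rfl⟩
    obtain ⟨m, hmn⟩ := nodePosAcy_mem_range_limit hgc hs hc n hn
    exact ⟨m, Retained.of_nodePosAcy_eq hc (nodePosAcy_mem_range_limit hgc hs hc) hn hmn.symm,
      nodeData_eq_limit hgc hs hg hc hn hmn⟩

end LimitSkeleton

theorem exists_ctg_skeleton_eq {S : Signature} {N : ℕ → Type} {c : ∀ d, TermGraph S (N d)}
    (hreach : ∀ d, (c d).Reachable)
    (hs : ∀ ⦃e d⦄, e ≤ d → (c e).skeleton e = (c d).skeleton e) :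
    ∃ g : CTG S, ∀ d, g.tg.skeleton d = (c d).skeleton d := by
  have hc ⦃e d : ℕ⦄ (hed : e ≤ d) : AgreeBelow e (c e) (c d) :=
    agreeBelow_of_skeleton_eq (hreach e) (hreach d) (hs hed)
  exact ⟨(eventualLQT hc).toCTG, fun d => skeleton_eq_limit (agreeBelow_eventualLQT hc)
    (fun _ hD => hs hD) (eventualLQT hc).toCTG.reach (hreach d)⟩

end TermGraph

/-! ### The rigid metric -/

namespace CTG

open TermGraph

variable {S : Signature} {g h g₁ g₂ : CTG S.bot} {d : ℕ}

theorem truncIso_top_iff : TruncIso g.tg h.tg ⊤ ↔ g = h := by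
  constructor
  · rintro ⟨hiso, -⟩
    exact eq_of_forall_agreeBelow (hiso rfl).agreeBelow
  · rintro rfl
    exact ⟨fun _ => Iso.refl _, fun _ hk => absurd hk (ENat.top_ne_natCast _)⟩

theorem truncIso_natCast_iff : TruncIso g.tg h.tg d ↔ g.tg.skeleton d = h.tg.skeleton d := by
  rw [← iso_trunc_iff_skeleton_eq g.reach h.reach]
  refine ⟨fun hd => hd.2 d rfl, fun hd => ⟨fun htop => absurd htop (ENat.natCast_ne_top d), ?_⟩⟩
  rintro k hk
  rwa [← Nat.cast_injective hk]

theorem natCast_le_simr_iff : (d : ℕ∞) ≤ simr g h ↔ g.tg.skeleton d = h.tg.skeleton d := by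
  refine ⟨fun hd => ?_, fun hs => le_sSup (truncIso_natCast_iff.2 hs)⟩
  obtain _ | d := d
  · rw [skeleton_zero, skeleton_zero]
  obtain ⟨x, hx, hdx⟩ := lt_sSup_iff.1 ((ENat.natCast_lt_natCast.2 d.lt_succ_self).trans_le hd)
  induction x using ENat.recTopCoe with
  | top => rw [truncIso_top_iff.1 hx]
  | coe k =>
    exact skeleton_eq_of_le g.reach h.reach (ENat.natCast_lt_natCast.1 hdx)
      (truncIso_natCast_iff.1 hx)

theorem simr_eq_top_iff : simr g h = ⊤ ↔ g = h := by
  rw [ENat.eq_top_iff_forall_ge]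
  simp only [natCast_le_simr_iff]
  refine ⟨fun hs => eq_of_forall_agreeBelow fun d => ?_, fun hgh _ => hgh ▸ rfl⟩
  exact agreeBelow_of_skeleton_eq g.reach h.reach (hs d)

theorem simr_comm (g h : CTG S.bot) : simr g h = simr h g :=
  ENat.eq_of_forall_natCast_le_iff fun d => by
    rw [natCast_le_simr_iff, natCast_le_simr_iff, eq_comm]

theorem min_simr_le_simr (g₁ g₂ g₃ : CTG S.bot) :
    min (simr g₁ g₂) (simr g₂ g₃) ≤ simr g₁ g₃ :=
  ENat.forall_natCast_le_iff_le.1 fun d hd => by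
    rw [le_min_iff, natCast_le_simr_iff, natCast_le_simr_iff] at hd
    exact natCast_le_simr_iff.2 (hd.1.trans hd.2)

theorem rdist_eq_zero_iff : rdist g h = 0 ↔ g = h := by
  rw [← simr_eq_top_iff, rdist]
  split_ifs with htop
  · simp only [htop]
  · simp only [htop, iff_false]
    positivity

theorem rdist_comm (g h : CTG S.bot) : rdist g h = rdist h g := by
  rw [rdist, rdist, simr_comm]

theorem rdist_le_pow_iff : rdist g h ≤ (1 / 2) ^ d ↔ g.tg.skeleton d = h.tg.skeleton d := by
  rw [← natCast_le_simr_iff, rdist]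
  split_ifs with htop
  · simp only [htop, le_top, iff_true]
    positivity
  · lift simr g h to ℕ using htop with k
    rw [ENat.toNat_natCast, Nat.cast_le]
    exact pow_le_pow_iff_right_of_lt_one₀ (by norm_num) (by norm_num)

theorem rdist_le_rdist_of_simr_le (hsim : simr g₁ g₂ ≤ simr g h) :
    rdist g h ≤ rdist g₁ g₂ := by
  by_cases htop : simr g₁ g₂ = ⊤
  · rw [htop, top_le_iff] at hsim
    rw [rdist, rdist, if_pos hsim, if_pos htop]
  · rw [rdist.eq_def g₁, if_neg htop, rdist_le_pow_iff, ← natCast_le_simr_iff]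
    exact (ENat.natCast_toNat htop).trans_le hsim

theorem rdist_le_max (g₁ g₂ g₃ : CTG S.bot) :
    rdist g₁ g₃ ≤ max (rdist g₁ g₂) (rdist g₂ g₃) := by
  have hmin := min_simr_le_simr g₁ g₂ g₃
  rw [min_le_iff] at hmin
  exact le_max_iff.2 (hmin.imp rdist_le_rdist_of_simr_le rdist_le_rdist_of_simr_le)

variable {f : ℕ → CTG S.bot}

theorem exists_forall_skeleton_eq_of_cauchy
    (hf : ∀ ε : ℝ, 0 < ε → ∃ N : ℕ, ∀ m n : ℕ, N ≤ m → N ≤ n → rdist (f m) (f n) < ε) (d : ℕ) :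
    ∃ N : ℕ, ∀ m n : ℕ, N ≤ m → N ≤ n → (f m).tg.skeleton d = (f n).tg.skeleton d := by
  obtain ⟨N, hN⟩ := hf ((1 / 2) ^ d) (by positivity)
  exact ⟨N, fun m n hm hn => rdist_le_pow_iff.1 (hN m n hm hn).le⟩

theorem exists_eventually_skeleton_eq
    (hf : ∀ d : ℕ, ∃ N : ℕ, ∀ m n : ℕ, N ≤ m → N ≤ n →
      (f m).tg.skeleton d = (f n).tg.skeleton d) :
    ∃ g : CTG S.bot, ∀ d : ℕ, ∃ N : ℕ, ∀ n : ℕ, N ≤ n →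
      (f n).tg.skeleton d = g.tg.skeleton d := by
  choose N hN using hf
  have hcoherent ⦃e d : ℕ⦄ (hed : e ≤ d) :
      (f (N e)).tg.skeleton e = (f (N d)).tg.skeleton e := by
    have hd := hN d (max (N e) (N d)) (N d) (le_max_right _ _) le_rfl
    exact (hN e _ _ le_rfl (le_max_left _ _)).trans
      (skeleton_eq_of_le (f _).reach (f _).reach hed hd)
  obtain ⟨g, hg⟩ := exists_ctg_skeleton_eq (fun d => (f (N d)).reach) hcoherent
  exact ⟨g, fun d => ⟨N d, fun n hn => (hN d n (N d) hn le_rfl).trans (hg d).symm⟩⟩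

theorem Total.of_forall_exists_skeleton_eq (hf : ∀ n, (f n).Total)
    (hg : ∀ d, ∃ n, (f n).tg.skeleton d = g.tg.skeleton d) : g.Total := by
  intro m
  obtain ⟨n, hn⟩ := hg (g.tg.depth m + 1)
  obtain ⟨k, -, hk⟩ := exists_nodeData_eq_of_skeleton_eq hn.symm (.shallow (Nat.lt_succ_self _))
  exact lab_eq_of_nodeData_eq hk ▸ hf n k

end CTG

theorem rigid_metric_complete_ultrametric_general (S : Signature) :
    (∀ g h : CTG S.bot, CTG.rdist g h = 0 ↔ g = h) ∧
    (∀ g h : CTG S.bot, CTG.rdist g h = CTG.rdist h g) ∧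
    (∀ g₁ g₂ g₃ : CTG S.bot,
      CTG.rdist g₁ g₃ ≤ max (CTG.rdist g₁ g₂) (CTG.rdist g₂ g₃)) ∧
    (∀ f : ℕ → CTG S.bot,
      (∀ ε : ℝ, 0 < ε → ∃ N : ℕ, ∀ m n : ℕ, N ≤ m → N ≤ n →
        CTG.rdist (f m) (f n) < ε) →
      ∃ g : CTG S.bot, ((∀ n, (f n).Total) → g.Total) ∧
        ∀ ε : ℝ, 0 < ε → ∃ N : ℕ, ∀ n : ℕ, N ≤ n → CTG.rdist (f n) g < ε) := by
  refine ⟨fun _ _ => CTG.rdist_eq_zero_iff, CTG.rdist_comm, CTG.rdist_le_max, fun f hf => ?_⟩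
  obtain ⟨g, hg⟩ := CTG.exists_eventually_skeleton_eq (CTG.exists_forall_skeleton_eq_of_cauchy hf)
  refine ⟨g, fun htotal => .of_forall_exists_skeleton_eq htotal fun d => ?_, fun ε hε => ?_⟩
  · obtain ⟨N, hN⟩ := hg d
    exact ⟨N, hN N le_rfl⟩
  · obtain ⟨d, hd⟩ := exists_pow_lt_of_lt_one hε one_half_lt_one
    obtain ⟨N, hN⟩ := hg d
    exact ⟨N, fun n hn => (CTG.rdist_le_pow_iff.2 (hN n hn)).trans_lt hd⟩

/-- The set of total canonical term graphs over a signature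
`Σ`, equipped with the rigid distance `d†(g,h) = 2^(−sim†(g,h))`, is a complete
ultrametric space (every Cauchy sequence converges). -/
theorem rigid_metric_complete_ultrametric (S : Signature) :
    (∀ g h : CTG S.bot, g.Total → h.Total → (CTG.rdist g h = 0 ↔ g = h)) ∧
    (∀ g h : CTG S.bot, g.Total → h.Total → CTG.rdist g h = CTG.rdist h g) ∧
    (∀ g₁ g₂ g₃ : CTG S.bot, g₁.Total → g₂.Total → g₃.Total →
      CTG.rdist g₁ g₃ ≤ max (CTG.rdist g₁ g₂) (CTG.rdist g₂ g₃)) ∧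
    (∀ f : ℕ → CTG S.bot, (∀ n, (f n).Total) →
      (∀ ε : ℝ, 0 < ε → ∃ N : ℕ, ∀ m n : ℕ, N ≤ m → N ≤ n →
        CTG.rdist (f m) (f n) < ε) →
      ∃ g : CTG S.bot, g.Total ∧
        ∀ ε : ℝ, 0 < ε → ∃ N : ℕ, ∀ n : ℕ, N ≤ n → CTG.rdist (f n) g < ε) := by
  obtain ⟨hzero, hcomm, hultra, hcomplete⟩ := rigid_metric_complete_ultrametric_general S
  exact ⟨fun g h _ _ => hzero g h, fun g h _ _ => hcomm g h, fun g₁ g₂ g₃ _ _ _ => hultra g₁ g₂ g₃,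
    fun f hf hcauchy => (hcomplete f hcauchy).imp fun _ hg => ⟨hg.1 hf, hg.2⟩⟩

end TGR
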